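/- arXiv:1707.02508 — 3 statements merged into one kernel-verified Lean document; each statement's English description precedes it below -/
import Mathlib

section
/- Let K be a field of characteristic zero that is finitely generated over ℚ, and let R ⊆ K be a finitely generated subring. Then there exist infinitely many prime numbers p for which there is a field embedding ι : K → ℚ_p such that ι(R) ⊆ ℤ_p and ι(K) is dense in ℚ_p. -/
open Polynomial in
theorem aux_clear {A F : Type*} [CommRing A] [IsDomain A] [Field F] [Algebra A F]
    [IsFractionRing A F] (q : F[X]) :
    ∃ b : A, b ≠ 0 ∧ ∃ g : A[X], g.map (algebraMap A F) = C (algebraMap A F b) * q := by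
  obtain ⟨b, hb0, hb⟩ := IsLocalization.integerNormalization_spec (nonZeroDivisors A) q
  refine ⟨b, nonZeroDivisors.ne_zero hb0, _, hb.trans ?_⟩
  rw [← Polynomial.smul_eq_C_mul, algebraMap_smul]

open Polynomial in
theorem aux_core {A F K : Type} [CommRing A] [IsDomain A] [Field F] [Algebra A F]
    [IsFractionRing A F] [Field K] [Algebra A K] [Algebra F K] [IsScalarTower A F K]
    [FiniteDimensional F K] [CharZero F] (s : Finset K) :
    ∃ (f u v : A[X]) (c : A), c ≠ 0 ∧ 0 < f.natDegree ∧ f.leadingCoeff ∣ c ∧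
      u * f + v * derivative f = C c ∧
      ∀ (E : Type) [Field E] (φ : A →+* E), Function.Injective φ →
        ∀ η : E, f.eval₂ φ η = 0 → ∃ ι : K →+* E, ∀ z ∈ s, ∃ q : A[X],
          φ c * ι z = q.eval₂ φ η := by
  classical
  let pb := Field.powerBasisOfFiniteOfSeparable F K
  set m := minpoly F pb.gen with hm
  have hint : IsIntegral F pb.gen := Algebra.IsIntegral.isIntegral _
  have hinj : Function.Injective (algebraMap A F) := IsFractionRing.injective A F
  obtain ⟨b, hb, f, hf⟩ := aux_clear (A := A) m
  have hb' : algebraMap A F b ≠ 0 := by simpa using hb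
  have hf0 : f ≠ 0 := by
    rintro rfl
    simp only [Polynomial.map_zero] at hf
    exact mul_ne_zero (by simpa using hb) (minpoly.ne_zero hint) hf.symm
  have hdeg : 0 < f.natDegree := by
    rw [← Polynomial.natDegree_map_eq_of_injective hinj, hf, Polynomial.natDegree_C_mul hb']
    exact minpoly.natDegree_pos hint
  have hsep : m.Separable := Algebra.IsSeparable.isSeparable F pb.gen
  obtain ⟨u0, v0, huv⟩ := hsep
  obtain ⟨b1, hb1, u, hu⟩ := aux_clear (A := A) u0
  obtain ⟨b2, hb2, v, hv⟩ := aux_clear (A := A) v0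
  have hz : ∀ z : K, ∃ d : A, d ≠ 0 ∧ ∃ q : A[X], ∃ q0 : F[X], z = aeval pb.gen q0 ∧
      q.map (algebraMap A F) = C (algebraMap A F d) * q0 := by
    intro z
    obtain ⟨q0, h0⟩ := pb.exists_eq_aeval' z
    obtain ⟨d, hd, q, hq⟩ := aux_clear (A := A) q0
    exact ⟨d, hd, q, q0, h0, hq⟩
  choose d hd q q0 hq0 hq using hz
  set e := f.leadingCoeff * ∏ z ∈ s, d z with he
  refine ⟨f, C (e * b2) * u, C (e * b1) * v, e * (b * b1 * b2), ?_, hdeg, ?_, ?_, ?_⟩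
  · refine mul_ne_zero (mul_ne_zero (by simpa using hf0) (Finset.prod_ne_zero_iff.2 fun z _ => hd z)) ?_
    exact mul_ne_zero (mul_ne_zero hb hb1) hb2
  · rw [he, mul_assoc]; exact dvd_mul_right _ _
  · apply Polynomial.map_injective _ hinj
    simp only [Polynomial.map_add, Polynomial.map_mul, ← Polynomial.derivative_map, hf, hu, hv,
      Polynomial.map_C, map_mul, Polynomial.derivative_C_mul]
    linear_combination (C (algebraMap A F e) * C (algebraMap A F b) * C (algebraMap A F b1) *
      C (algebraMap A F b2)) * huv
  · intro E _ φ hφ η hη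
    let ψ : F →+* E := IsFractionRing.lift hφ
    have hψ : ∀ a, ψ (algebraMap A F a) = φ a := fun a => IsFractionRing.lift_algebraMap hφ a
    have hψc : ψ.comp (algebraMap A F) = φ := RingHom.ext hψ
    let : Algebra F E := ψ.toAlgebra
    have hev : ∀ g : A[X], aeval η (g.map (algebraMap A F)) = g.eval₂ φ η := by
      intro g
      rw [aeval_def, eval₂_map]
      change eval₂ (ψ.comp (algebraMap A F)) η g = _
      rw [hψc]
    have hroot : aeval η m = 0 := by
      have := hev f
      rw [hf, hη, map_mul, aeval_C] at this
      refine (mul_eq_zero.1 this).resolve_left ?_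
      simpa using hb
    refine ⟨(pb.lift η hroot).toRingHom, fun z hzs => ?_⟩
    obtain ⟨w, hw⟩ : d z ∣ e * (b * b1 * b2) :=
      Dvd.dvd.mul_right (Dvd.dvd.mul_left (Finset.dvd_prod_of_mem d hzs) _) _
    refine ⟨C w * q z, ?_⟩
    have h1 : (pb.lift η hroot) z = aeval η (q0 z) := by
      conv_lhs => rw [hq0 z]
      rw [pb.lift_aeval]
    have h2 := hev (q z)
    rw [hq, map_mul, aeval_C] at h2
    change ψ _ * _ = _ at h2
    rw [hψ] at h2
    change φ _ * (pb.lift η hroot) z = _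
    rw [hw, h1, eval₂_mul, eval₂_C, ← h2, map_mul]
    ring

open Polynomial in
theorem aux_primes (g : ℤ[X]) (hg : 0 < g.natDegree) (N : ℕ) :
    ∃ p : ℕ, N < p ∧ p.Prime ∧ ∃ m : ℤ, (p : ℤ) ∣ g.eval m := by
  by_cases h0 : g.coeff 0 = 0
  · obtain ⟨p, hp, hpp⟩ := Nat.exists_infinite_primes (N + 1)
    exact ⟨p, hp, hpp, 0, by simp [← Polynomial.coeff_zero_eq_eval_zero, h0]⟩
  set c := g.coeff 0 with hc
  obtain ⟨M, hM⟩ : ∃ M : ℤ, M = ((Nat.factorial N : ℕ) : ℤ) := ⟨_, rfl⟩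
  have hM0 : M ≠ 0 := by rw [hM]; exact_mod_cast N.factorial_ne_zero
  -- some k with value not c, -c
  have hcomp : ∃ k : ℤ, g.eval (c * M * k) ≠ c ∧ g.eval (c * M * k) ≠ -c := by
    by_contra! hcon
    let h : ℤ[X] := (g.comp (C (c * M) * X) - C c) * (g.comp (C (c * M) * X) + C c)
    have hz : h = 0 := by
      apply Polynomial.funext
      intro k
      simp only [h, eval_mul, eval_sub, eval_add, eval_comp, eval_C, eval_X, eval_zero]
      by_cases hk : g.eval (c * M * k) = c
      · rw [hk]; ring
      · rw [hcon k hk]; ring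
    have hd : (g.comp (C (c * M) * X)).natDegree = g.natDegree := by
      rw [natDegree_comp, natDegree_C_mul_X _ (mul_ne_zero h0 hM0), mul_one]
    rcases mul_eq_zero.1 hz with h | h
    · rw [sub_eq_zero.1 h, natDegree_C] at hd; omega
    · rw [eq_neg_of_add_eq_zero_left h, natDegree_neg, natDegree_C] at hd; omega
  obtain ⟨k, hk1, hk2⟩ := hcomp
  obtain ⟨w, hw⟩ : c * M * k ∣ g.eval (c * M * k) - c := by
    have := Polynomial.sub_dvd_eval_sub (c * M * k) 0 g
    rwa [sub_zero, ← Polynomial.coeff_zero_eq_eval_zero] at this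
  have hval : g.eval (c * M * k) = c * (1 + M * (k * w)) := by linear_combination hw
  have hne : (1 + M * (k * w)).natAbs ≠ 1 := by
    intro h
    rcases Int.natAbs_eq_iff.1 h with h | h
    · exact hk1 (by rw [hval, h]; simp)
    · exact hk2 (by rw [hval, h]; simp)
  obtain ⟨p, hp, hpd⟩ := Nat.exists_prime_and_dvd hne
  have hpd' : (p : ℤ) ∣ 1 + M * (k * w) := Int.natCast_dvd.2 hpd
  refine ⟨p, ?_, hp, c * M * k, hval ▸ hpd'.mul_left _⟩
  by_contra! hle
  have : (p : ℤ) ∣ M := by rw [hM]; exact_mod_cast (Nat.Prime.dvd_factorial hp).2 hle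
  have h1 : (p : ℤ) ∣ 1 := (Int.dvd_add_left (this.mul_right _)).1 hpd'
  exact hp.one_lt.ne' (by exact_mod_cast Int.eq_one_of_dvd_one (by positivity) h1)

theorem aux_indep (p : ℕ) [Fact p.Prime] {σ : Type} [Finite σ] (a : σ → ℤ) :
    ∃ t : σ → ℤ_[p], AlgebraicIndependent ℤ t ∧
      ∀ i, PadicInt.toZMod (t i) = (a i : ZMod p) := by
  classical
  obtain ⟨B, hB⟩ := exists_isTranscendenceBasis ℤ ℚ_[p]
  have hinf : Infinite B := by
    by_contra hfin
    have hfin' : Finite B := not_infinite_iff_finite.1 hfin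
    have := hB.isAlgebraic
    have h1 := Algebra.IsAlgebraic.cardinalMk_le_max
      (Algebra.adjoin ℤ (Set.range ((↑) : B → ℚ_[p]))) ℚ_[p]
    have h2 : Cardinal.mk (Algebra.adjoin ℤ (Set.range ((↑) : B → ℚ_[p]))) ≤ Cardinal.aleph0 := by
      have e := hB.1.aevalEquiv.toEquiv
      rw [← Cardinal.mk_congr e]
      refine MvPolynomial.cardinalMk_le_max.trans ?_
      simp
    have h3 := continuum_le_cardinal_of_nontriviallyNormedField ℚ_[p]
    exact (h3.trans (h1.trans (max_le h2 le_rfl))).not_gt Cardinal.aleph0_lt_continuum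
  obtain ⟨n, ⟨en⟩⟩ := Finite.exists_equiv_fin σ
  let j : σ → B := fun i => Infinite.natEmbedding B (en i)
  have hj : Function.Injective j := fun x y h =>
    en.injective (Fin.ext ((Infinite.natEmbedding B).injective h))
  have hz : AlgebraicIndependent ℤ (fun i => ((j i : B) : ℚ_[p])) := hB.1.comp j hj
  have hp : (p : ℤ) ≠ 0 := by exact_mod_cast (Fact.out : p.Prime).ne_zero
  have hk : ∀ i, ∃ k : ℕ, ‖(p : ℚ_[p]) ^ k * (j i : ℚ_[p])‖ ≤ 1 := by
    intro i
    obtain ⟨k, hk⟩ := exists_pow_lt_of_lt_one (y := ‖(p : ℚ_[p])‖)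
      (x := (‖(j i : ℚ_[p])‖ + 1)⁻¹) (by positivity) Padic.norm_p_lt_one
    refine ⟨k, ?_⟩
    rw [norm_mul, norm_pow]
    have : 0 ≤ ‖(j i : ℚ_[p])‖ := norm_nonneg _
    calc _ ≤ (‖(j i : ℚ_[p])‖ + 1)⁻¹ * (‖(j i : ℚ_[p])‖ + 1) := by gcongr; linarith
      _ = 1 := inv_mul_cancel₀ (by positivity)
  choose k hk using hk
  let w : σ → ℤ_[p] := fun i => ⟨_, hk i⟩
  let t : σ → ℤ_[p] := fun i => a i + p * w i
  refine ⟨t, ?_, fun i => by simp only [t, map_add, map_mul, map_intCast, map_natCast, CharP.cast_eq_zero, zero_mul, add_zero]⟩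
  have h1 := hz.polynomial_aeval_of_transcendental
    (f := fun i => Polynomial.C ((p : ℤ) ^ (k i + 1)) * Polynomial.X + Polynomial.C (a i)) (by
      intro i
      refine Polynomial.transcendental _ ?_ ?_
      · rw [Polynomial.natDegree_linear (pow_ne_zero _ hp)]
        exact one_ne_zero
      · rw [Polynomial.leadingCoeff_linear (pow_ne_zero _ hp)]
        exact mem_nonZeroDivisors_of_ne_zero (pow_ne_zero _ hp))
  let incl : ℤ_[p] →ₐ[ℤ] ℚ_[p] := (PadicInt.Coe.ringHom (p := p)).toIntAlgHom
  refine AlgebraicIndependent.of_comp incl ?_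
  convert h1 using 1
  ext i
  have : incl (t i) = (a i : ℚ_[p]) + p * (p ^ k i * (j i : ℚ_[p])) := by
    simp only [t, map_add, map_mul, map_intCast, map_natCast]
    rfl
  simp only [Function.comp, this, map_add, map_mul, Polynomial.aeval_C, Polynomial.aeval_X]
  simp [pow_succ]
  ring

theorem aux_norm (p : ℕ) [Fact p.Prime] (x : ℤ_[p]) :
    PadicInt.toZMod x = 0 ↔ ‖x‖ < 1 := by
  rw [← RingHom.mem_ker, PadicInt.ker_toZMod, IsLocalRing.mem_maximalIdeal, PadicInt.mem_nonunits]

theorem aux_norm' (p : ℕ) [Fact p.Prime] (x : ℤ_[p]) (h : PadicInt.toZMod x ≠ 0) :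
    ‖x‖ = 1 :=
  le_antisymm (PadicInt.norm_le_one x) (not_lt.1 fun h' => h ((aux_norm p x).2 h'))

theorem aux_alg {K : Type} [Field K] (s : Set K) (hs : Subfield.closure s = ⊤) :
    Algebra.IsAlgebraic (Algebra.adjoin ℤ s) K := by
  constructor
  intro x
  have hx : x ∈ Subfield.closure s := hs ▸ Subfield.mem_top x
  induction hx using Subfield.closure_induction with
  | mem x hx => exact isAlgebraic_algebraMap (⟨x, Algebra.subset_adjoin hx⟩ : Algebra.adjoin ℤ s)
  | one => exact isAlgebraic_one
  | add x y _ _ hx hy => exact hx.add hy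
  | neg x _ hx => exact hx.neg
  | inv x _ hx => exact hx.inv
  | mul x y _ _ hx hy => exact hx.mul hy

open Polynomial in
theorem aux_hensel (p : ℕ) [Fact p.Prime] {A : Type} [CommRing A] (f u v : A[X]) (c : A)
    (huv : u * f + v * derivative f = C c) (φ : A →+* ℤ) (ψ : A →+* ℤ_[p])
    (hc : ¬ (p : ℤ) ∣ φ c) (hcomp : ∀ a, PadicInt.toZMod (ψ a) = (φ a : ZMod p))
    (m : ℤ) (hm : (p : ℤ) ∣ (f.map φ).eval m) :
    ∃ η : ℤ_[p], f.eval₂ ψ η = 0 := by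
  have hcomp' : (PadicInt.toZMod (p := p)).comp ψ = (Int.castRingHom (ZMod p)).comp φ :=
    RingHom.ext hcomp
  have key : ∀ g : A[X], PadicInt.toZMod (g.eval₂ ψ (m : ℤ_[p])) =
      (((g.map φ).eval m : ℤ) : ZMod p) := by
    intro g
    rw [Polynomial.hom_eval₂, hcomp', eval_map, map_intCast]
    have := Polynomial.hom_eval₂ g φ (Int.castRingHom (ZMod p)) m
    simpa using this.symm
  have h1 : PadicInt.toZMod (f.eval₂ ψ (m : ℤ_[p])) = 0 := by
    rw [key, ZMod.intCast_zmod_eq_zero_iff_dvd]; exact hm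
  have h2 : PadicInt.toZMod ((derivative f).eval₂ ψ (m : ℤ_[p])) ≠ 0 := by
    intro h
    have := congrArg (fun g => PadicInt.toZMod (g.eval₂ ψ (m : ℤ_[p]))) huv
    simp only [eval₂_add, eval₂_mul, map_add, map_mul, h1, h, mul_zero, add_zero, eval₂_C,
      hcomp] at this
    exact hc ((ZMod.intCast_zmod_eq_zero_iff_dvd _ _).1 this.symm)
  have hh : ‖aeval (m : ℤ_[p]) (f.map ψ)‖ < ‖aeval (m : ℤ_[p]) (derivative (f.map ψ))‖ ^ 2 := by
    rw [derivative_map, coe_aeval_eq_eval, eval_map, eval_map, aux_norm' p _ h2, one_pow]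
    exact (aux_norm p _).1 h1
  obtain ⟨z, hz, -⟩ := hensels_lemma hh
  exact ⟨z, by rwa [coe_aeval_eq_eval, eval_map] at hz⟩

theorem exists_infinitely_many_padic_embeddings
    {K : Type} [Field K] [CharZero K]
    (hKfg : ∃ s : Finset K, Subfield.closure (s : Set K) = ⊤)
    (R : Subring K) (hRfg : ∃ s : Finset K, Subring.closure (s : Set K) = R) :
    ∃ S : Set ℕ, S.Infinite ∧ (∀ p ∈ S, p.Prime) ∧
      ∀ (p : ℕ), p ∈ S → ∀ [Fact p.Prime],
        ∃ ι : K →+* ℚ_[p], (∀ x ∈ R, ‖ι x‖ ≤ 1) ∧ DenseRange ι := by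
  obtain ⟨s, hs⟩ := hKfg
  obtain ⟨r, rfl⟩ := hRfg
  have := aux_alg (s : Set K) hs
  obtain ⟨B, hBs, hB⟩ := exists_isTranscendenceBasis_subset (R := ℤ) (s : Set K)
  have hBfin : Finite B := s.finite_toSet.subset hBs
  have halg := hB.isAlgebraic
  let A := Algebra.adjoin ℤ (Set.range ((↑) : B → K))
  let F := FractionRing A
  let : Algebra F K := FractionRing.liftAlgebra A K
  have : IsScalarTower A F K := FractionRing.isScalarTower_liftAlgebra A K
  have halgF : Algebra.IsAlgebraic F K := (IsFractionRing.comap_isAlgebraic_iff (A := A)).1 halg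
  have hfd : FiniteDimensional F K := by
    have htop : IntermediateField.adjoin F (s : Set K) = ⊤ := by
      rw [eq_top_iff]
      intro x _
      have hx : x ∈ Subfield.closure (s : Set K) := hs ▸ Subfield.mem_top x
      exact (Subfield.closure_le (t := (IntermediateField.adjoin F (s : Set K)).toSubfield)).2
        (IntermediateField.subset_adjoin F _) hx
    have := IntermediateField.finiteDimensional_adjoin (K := F) (S := (s : Set K))
      (fun x _ => (Algebra.IsAlgebraic.isAlgebraic x).isIntegral)
    rw [htop] at this
    exact Module.Finite.equiv (IntermediateField.topEquiv (F := F) (E := K)).toLinearEquiv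
  have hcz : CharZero F := charZero_of_injective_algebraMap (FaithfulSMul.algebraMap_injective ℤ F)
  obtain ⟨f, u, v, c, hc, hdeg, hlc, huv, hE⟩ := aux_core (A := A) (F := F) (K := K) r
  let e := hB.1.aevalEquiv
  obtain ⟨a, ha⟩ : ∃ a : B → ℤ, MvPolynomial.eval a (e.symm c) ≠ 0 := by
    by_contra! h
    have : e.symm c = 0 := MvPolynomial.funext fun x => by simpa using h x
    exact hc (by simpa using this)
  let φ : A →+* ℤ := (MvPolynomial.eval a).comp e.symm.toRingHom
  have hφc : φ c ≠ 0 := ha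
  have hdeg' : 0 < (f.map φ).natDegree := by
    rw [Polynomial.natDegree_map_of_leadingCoeff_ne_zero]
    · exact hdeg
    · intro h0
      obtain ⟨w, rfl⟩ := hlc
      exact hφc (by rw [map_mul, h0, zero_mul])
  refine ⟨{p : ℕ | p.Prime ∧ ¬ (p : ℤ) ∣ φ c ∧ ∃ m : ℤ, (p : ℤ) ∣ (f.map φ).eval m},
    ?_, fun p hp => hp.1, ?_⟩
  · rw [Set.infinite_iff_exists_gt]
    intro N
    obtain ⟨p, hp, hpp, m, hm⟩ := aux_primes (f.map φ) hdeg' (N + (φ c).natAbs)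
    refine ⟨p, ⟨hpp, fun hd => ?_, m, hm⟩, by omega⟩
    have := Nat.le_of_dvd (Int.natAbs_pos.2 hφc) (Int.natCast_dvd.1 hd)
    omega
  · rintro p ⟨-, hpc, m, hm⟩ _
    obtain ⟨t, ht, hta⟩ := aux_indep p a
    let ψ : A →+* ℤ_[p] := (MvPolynomial.aeval t).toRingHom.comp e.symm.toRingHom
    have hψ : Function.Injective ψ := by
      have h1 : Function.Injective (MvPolynomial.aeval t : MvPolynomial B ℤ →ₐ[ℤ] ℤ_[p]) := ht
      exact h1.comp e.symm.injective
    have hcomp : ∀ x, PadicInt.toZMod (ψ x) = (φ x : ZMod p) := by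
      have : (PadicInt.toZMod (p := p)).comp (MvPolynomial.aeval t).toRingHom =
          (Int.castRingHom (ZMod p)).comp (MvPolynomial.eval a) := by
        apply MvPolynomial.ringHom_ext
        · intro z; simp
        · intro i; simp [hta]
      intro x
      exact DFunLike.congr_fun this (e.symm x)
    obtain ⟨η, hη⟩ := aux_hensel p f u v c huv φ ψ hpc hcomp m hm
    let incl := PadicInt.Coe.ringHom (p := p)
    have hincl : Function.Injective incl := Subtype.val_injective
    have hev : ∀ g : Polynomial A, g.eval₂ (incl.comp ψ) (incl η) = incl (g.eval₂ ψ η) :=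
      fun g => (Polynomial.hom_eval₂ g ψ incl η).symm
    obtain ⟨ι, hι⟩ := hE ℚ_[p] (incl.comp ψ) (hincl.comp hψ) (incl η) (by
      rw [hev, hη, map_zero])
    refine ⟨ι, ?_, ?_⟩
    · intro x hx
      have hle : Subring.closure (r : Set K) ≤ (PadicInt.subring p).comap ι := by
        rw [Subring.closure_le]
        intro z hz
        obtain ⟨q, hq⟩ := hι z hz
        rw [hev] at hq
        change ‖ι z‖ ≤ 1
        have hn : ‖ψ c‖ = 1 := aux_norm' p _ (by
          rw [hcomp]
          exact fun h => hpc ((ZMod.intCast_zmod_eq_zero_iff_dvd _ _).1 h))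
        have h3 := congrArg norm hq
        rw [norm_mul] at h3
        have h4 : ‖(incl.comp ψ) c‖ = 1 := hn
        rw [h4, one_mul] at h3
        rw [h3]
        exact PadicInt.norm_le_one (q.eval₂ ψ η)
      exact hle hx
    · have h := Padic.denseRange_ratCast p
      refine h.mono ?_
      rintro _ ⟨q, rfl⟩
      exact ⟨q, map_ratCast ι q⟩
end

section
/- Let K be a field, let Δ ⊆ M_n(K) be a multiplicative subsemigroup of the n×n matrices over K which is absolutely irreducible, and let E be a subfield of K such that tr(δ) ∈ E for every δ ∈ Δ. Then the characteristic polynomial of every δ ∈ Δ has all its coefficients in E. -/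
/-- A multiplicative subsemigroup `Δ ⊆ Mₙ(K)` is *absolutely irreducible* if the natural action
of `Δ` on `K̄ⁿ` is irreducible, where `K̄` is an algebraic closure of `K`: the space is nonzero
and the only `Δ`-invariant subspaces of `K̄ⁿ` are `0` and `K̄ⁿ`. -/
def Subsemigroup.AbsolutelyIrreducible {K : Type*} [Field K] {n : ℕ}
    (Δ : Subsemigroup (Matrix (Fin n) (Fin n) K)) : Prop :=
  0 < n ∧
  ∀ W : Submodule (AlgebraicClosure K) (Fin n → AlgebraicClosure K),
    (∀ δ ∈ Δ, ∀ x ∈ W, (δ.map (algebraMap K (AlgebraicClosure K))).mulVec x ∈ W) →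
    W = ⊥ ∨ W = ⊤

theorem vin_burnside {F : Type*} [Field F] [IsAlgClosed F] {n : ℕ} (hn : 0 < n)
    (S : Subsemigroup (Matrix (Fin n) (Fin n) F))
    (hirr : ∀ W : Submodule F (Fin n → F),
      (∀ δ ∈ S, ∀ x ∈ W, δ.mulVec x ∈ W) → W = ⊥ ∨ W = ⊤) :
    Algebra.adjoin F (Matrix.toLinAlgEquiv' '' (S : Set (Matrix (Fin n) (Fin n) F))) =
      (⊤ : Subalgebra F (Module.End F (Fin n → F))) := by
  have : Nonempty (Fin n) := ⟨⟨0, hn⟩⟩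
  set A := Algebra.adjoin F (Matrix.toLinAlgEquiv' '' (S : Set (Matrix (Fin n) (Fin n) F)))
    with hA
  have hS : ∀ δ ∈ S, Matrix.toLinAlgEquiv' δ ∈ A := fun δ hδ =>
    Algebra.subset_adjoin ⟨δ, hδ, rfl⟩
  have : IsSimpleModule A (Fin n → F) := by
    refine (isSimpleModule_iff _ _).2 { eq_bot_or_eq_top := fun W => ?_ }
    rcases hirr (W.restrictScalars F) (fun δ hδ x hx => by
      have := W.smul_mem ⟨_, hS δ hδ⟩ hx
      simpa [Subalgebra.smul_def] using this) with h | h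
    · left; simpa using h
    · right; simpa using h
  have hbij := IsSimpleModule.algebraMap_end_bijective_of_isAlgClosed (A := A)
    (V := Fin n → F) F
  rw [eq_top_iff]
  intro f _
  let g : Module.End (Module.End A (Fin n → F)) (Fin n → F) :=
    { toFun := f
      map_add' := f.map_add
      map_smul' := by
        intro c x
        obtain ⟨t, rfl⟩ := hbij.2 c
        simp }
  classical
  obtain ⟨r, hr⟩ := jacobson_density (R := A) g
    (Finset.univ.image fun i : Fin n => (Pi.single i 1 : Fin n → F))
  have : f = r := by
    refine (Pi.basisFun F (Fin n)).ext fun i => ?_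
    have := hr (Pi.single i 1) (by simp)
    simpa [g, Subalgebra.smul_def] using this
  rw [this]; exact r.2

theorem vin_span {F : Type*} [Field F] [IsAlgClosed F] {n : ℕ} (hn : 0 < n)
    (S : Subsemigroup (Matrix (Fin n) (Fin n) F))
    (hirr : ∀ W : Submodule F (Fin n → F),
      (∀ δ ∈ S, ∀ x ∈ W, δ.mulVec x ∈ W) → W = ⊥ ∨ W = ⊤)
    (d : Matrix (Fin n) (Fin n) F) (hd : d ∈ S) (hd0 : d ≠ 0) :
    Submodule.span F (S : Set (Matrix (Fin n) (Fin n) F)) = ⊤ := by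
  have h1 : ∀ a : Matrix (Fin n) (Fin n) F,
      a ∈ Algebra.adjoin F (S : Set (Matrix (Fin n) (Fin n) F)) := by
    intro a
    have hb := vin_burnside hn S hirr
    have := AlgHom.map_adjoin (Matrix.toLinAlgEquiv' (R := F) (n := Fin n)).toAlgHom
      (S : Set (Matrix (Fin n) (Fin n) F))
    have h2 : Matrix.toLinAlgEquiv' a ∈ (Algebra.adjoin F (S : Set (Matrix (Fin n) (Fin n) F))).map
      (Matrix.toLinAlgEquiv' (R := F) (n := Fin n)).toAlgHom := by
      rw [this]
      have h3 : Matrix.toLinAlgEquiv' a ∈ (⊤ : Subalgebra F (Module.End F (Fin n → F))) := trivial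
      rw [← hb] at h3
      exact h3
    obtain ⟨b, hb, hab⟩ := h2
    have : b = a := (Matrix.toLinAlgEquiv' (R := F) (n := Fin n)).injective hab
    exact this ▸ hb
  set M := Submodule.span F (S : Set (Matrix (Fin n) (Fin n) F)) with hM
  have h0 : ∀ a ∈ S, ∀ x ∈ M, a * x ∈ M ∧ x * a ∈ M := by
    intro a ha x hx
    induction hx using Submodule.span_induction with
    | mem x hx => exact ⟨Submodule.subset_span (S.mul_mem ha hx),
        Submodule.subset_span (S.mul_mem hx ha)⟩
    | zero => simp
    | add x y _ _ h1 h2 =>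
      rw [mul_add, add_mul]; exact ⟨M.add_mem h1.1 h2.1, M.add_mem h1.2 h2.2⟩
    | smul c x _ h =>
      rw [mul_smul_comm, smul_mul_assoc]; exact ⟨M.smul_mem _ h.1, M.smul_mem _ h.2⟩
  have h2 : ∀ a : Matrix (Fin n) (Fin n) F, ∀ x ∈ M, a * x ∈ M ∧ x * a ∈ M := by
    intro a
    induction h1 a using Algebra.adjoin_induction with
    | mem a ha => exact h0 a ha
    | algebraMap r =>
      intro x hx
      rw [Algebra.algebraMap_eq_smul_one, mul_smul_comm, smul_mul_assoc, one_mul, mul_one]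
      exact ⟨M.smul_mem _ hx, M.smul_mem _ hx⟩
    | add a b _ _ ha hb =>
      intro x hx
      rw [mul_add, add_mul]
      exact ⟨M.add_mem (ha x hx).1 (hb x hx).1, M.add_mem (ha x hx).2 (hb x hx).2⟩
    | mul a b _ _ ha hb =>
      intro x hx
      rw [mul_assoc, ← mul_assoc x]
      exact ⟨(ha _ (hb x hx).1).1, (hb _ (ha x hx).2).2⟩
  obtain ⟨k, l, hkl⟩ : ∃ k l, d k l ≠ 0 := by
    by_contra! h
    exact hd0 (Matrix.ext h)
  rw [eq_top_iff]
  intro x _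
  rw [Matrix.matrix_eq_sum_single x]
  refine M.sum_mem fun i _ => M.sum_mem fun j _ => ?_
  have h3 := (h2 (Matrix.single l j 1) _ (h2 (Matrix.single i k (x i j / d k l)) d
    (Submodule.subset_span hd)).1).2
  have h4 : Matrix.single i k (x i j / d k l) * d * Matrix.single l j 1
      = Matrix.single i j (x i j) := by
    ext a b
    simp only [Matrix.mul_apply, Matrix.single_apply]
    by_cases hi : i = a <;> by_cases hj : j = b <;> simp [hi, hj, hkl]
  rwa [h4] at h3

open Polynomial in
theorem vin_charpoly {F L : Type*} [Field F] [CommRing L] [Algebra F L] {n : ℕ}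
    (ψ : Matrix (Fin n) (Fin n) F →ₐ[F] Matrix (Fin n) (Fin n) L)
    (x : Matrix (Fin n) (Fin n) F) :
    (ψ x).charpoly = (x.map (algebraMap F L)).charpoly := by
  rcases Nat.eq_zero_or_pos n with rfl | hn
  · congr 1; exact Subsingleton.elim _ _
  let o : Fin n := ⟨0, hn⟩
  let P : Fin n → Matrix (Fin n) (Fin n) L := fun v =>
    Matrix.of fun r c => ψ (Matrix.single c o 1) r v
  have hP : ∀ v, ψ x * P v = P v * x.map (algebraMap F L) := by
    intro v
    ext r c
    have h1 : x * Matrix.single c o 1 = ∑ i, x i c • Matrix.single i o 1 := by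
      ext a b
      simp only [Matrix.mul_apply, Matrix.single_apply, Matrix.sum_apply, Matrix.smul_apply]
      by_cases hb : o = b <;> simp [hb]
    have h2 := congrFun (congrFun (congrArg ψ h1) r) v
    rw [map_mul, map_sum, Matrix.mul_apply, Matrix.sum_apply] at h2
    simp only [map_smul, Matrix.smul_apply] at h2
    simp only [Algebra.smul_def (A := L)] at h2
    simp only [Matrix.mul_apply, P, Matrix.of_apply, Matrix.map_apply]
    rw [h2]
    exact Finset.sum_congr rfl fun _ _ => mul_comm _ _
  have hdet : ∀ v, (ψ x).charpoly * C (P v).det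
      = (x.map (algebraMap F L)).charpoly * C (P v).det := by
    intro v
    have h : (ψ x).charmatrix * (P v).map C
        = (P v).map C * (x.map (algebraMap F L)).charmatrix := by
      simp only [Matrix.charmatrix, sub_mul, mul_sub, RingHom.mapMatrix_apply]
      rw [← Matrix.map_mul, ← Matrix.map_mul, hP v, (Matrix.scalar_commute _ _ _).eq]
      intro r; exact mul_comm _ _
    have h' := congrArg Matrix.det h
    rw [Matrix.det_mul, Matrix.det_mul] at h'
    have : ((P v).map C).det = C (P v).det := by
      rw [RingHom.map_det]; rfl
    rw [this] at h'
    rw [Matrix.charpoly, Matrix.charpoly, h', mul_comm]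
  ext i
  rw [← sub_eq_zero]
  set a := (ψ x).charpoly.coeff i - (x.map (algebraMap F L)).charpoly.coeff i with ha
  have hann : ∀ v, a * (P v).det = 0 := by
    intro v
    have := congrArg (fun p => coeff p i) (hdet v)
    simp only [coeff_mul_C] at this
    rw [ha, sub_mul, this, sub_self]
  let I : Ideal L := Ideal.span (Set.range fun v => (P v).det)
  have hI : I = ⊤ := by
    by_contra hne
    obtain ⟨m, hm, hIm⟩ := Ideal.exists_le_maximal I hne
    let : Field (L ⧸ m) := Ideal.Quotient.field m
    let q := Ideal.Quotient.mk m
    let θ : Matrix (Fin n) (Fin n) F →+* Matrix (Fin n) (Fin n) (L ⧸ m) :=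
      (RingHom.mapMatrix q).comp ψ.toRingHom
    have hθ : ∀ y r c, θ y r c = q (ψ y r c) := fun _ _ _ => rfl
    have hθ0 : θ (Matrix.single o o 1) = 0 := by
      ext r v
      have h0 : ((P v).map q).det = 0 := by
        have : (P v).det ∈ m := hIm (Ideal.subset_span ⟨v, rfl⟩)
        have h := RingHom.map_det q (P v)
        rw [Ideal.Quotient.eq_zero_iff_mem.2 this] at h
        exact h.symm
      obtain ⟨w, hw0, hw⟩ := Matrix.exists_mulVec_eq_zero_iff.2 h0
      obtain ⟨j, hj⟩ := Function.ne_iff.1 hw0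
      have key : ((θ (Matrix.single o j 1)) * ((P v).map q)).mulVec w r = 0 := by
        rw [← Matrix.mulVec_mulVec, hw]; simp
      have h5 : ∀ c, ((θ (Matrix.single o j 1)) * ((P v).map q)) r c =
          if j = c then θ (Matrix.single o o 1) r v else 0 := by
        intro c
        have : ((θ (Matrix.single o j 1)) * ((P v).map q)) r c
          = (θ (Matrix.single o j 1) * θ (Matrix.single c o 1)) r v := rfl
        rw [this, ← map_mul]
        split_ifs with hc
        · subst hc; simp
        · rw [Matrix.single_mul_single_of_ne _ _ _ _ hc]; simp
      simp only [Matrix.mulVec, dotProduct, h5] at key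
      simp only [ite_mul, zero_mul, Finset.sum_ite_eq, Finset.mem_univ, if_true] at key
      exact (mul_eq_zero.1 key).resolve_right hj
    have h1 : θ 1 = 0 := by
      have : (1 : Matrix (Fin n) (Fin n) F)
        = ∑ i, Matrix.single i o 1 * Matrix.single o o 1 * Matrix.single o i 1 := by
        simp [Matrix.sum_single_one]
      rw [this, map_sum]
      refine Finset.sum_eq_zero fun i _ => ?_
      rw [map_mul, map_mul, hθ0]; simp
    rw [map_one] at h1
    have := congrFun (congrFun h1 o) o
    simp at this
  have h6 : I ≤ LinearMap.ker (LinearMap.mulLeft L a) := by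
    rw [Ideal.span_le]
    rintro _ ⟨v, rfl⟩
    exact hann v
  have h7 : (1 : L) ∈ LinearMap.ker (LinearMap.mulLeft L a) := h6 (hI ▸ trivial)
  simpa using h7

open scoped TensorProduct in
theorem vin_main {E F : Type*} [Field E] [Field F] [Algebra E F] {n : ℕ}
    (S : Subsemigroup (Matrix (Fin n) (Fin n) F))
    (hS : Submodule.span F (S : Set (Matrix (Fin n) (Fin n) F)) = ⊤)
    (htr : ∀ δ ∈ S, δ.trace ∈ Set.range (algebraMap E F))
    (δ : Matrix (Fin n) (Fin n) F) (hδ : δ ∈ S) (i : ℕ) :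
    δ.charpoly.coeff i ∈ Set.range (algebraMap E F) := by
  obtain ⟨B, hBS, hBspan, hBli⟩ := exists_linearIndependent F
    (S : Set (Matrix (Fin n) (Fin n) F))
  let b : Module.Basis B F (Matrix (Fin n) (Fin n) F) :=
    Module.Basis.mk hBli (by rw [Subtype.range_coe, hBspan, hS])
  have hb : ∀ i, b i = i.1 := fun i => by simp [b]
  have hbS : ∀ i, b i ∈ S := fun i => by rw [hb]; exact hBS i.2
  have : Finite B := Module.Finite.finite_basis b
  let := Fintype.ofFinite B
  classical
  have hG : ∀ i j, ∃ e : E, algebraMap E F e = (b i * b j).trace := fun i j =>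
    htr _ (S.mul_mem (hbS i) (hbS j))
  choose G0 hG0 using hG
  have hinj : ∀ y : B → F, (∀ j, ∑ i, y i * (b i * b j).trace = 0) → y = 0 := by
    intro y hy
    have h1 : ∑ i, y i • b i = 0 := by
      rw [Matrix.ext_iff_trace_mul_right]
      intro z
      rw [zero_mul, Matrix.trace_zero]
      let T : Matrix (Fin n) (Fin n) F →ₗ[F] F :=
        (Matrix.traceLinearMap (Fin n) F F) ∘ₗ (LinearMap.mulLeft F (∑ i, y i • b i))
      have : T = 0 := b.ext fun j => by
        simpa [T, Finset.sum_mul, Matrix.trace_sum] using hy j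
      exact LinearMap.congr_fun this z
    funext i
    exact Fintype.linearIndependent_iff.1 b.linearIndependent y h1 i
  have hdet : (Matrix.of G0).det ≠ 0 := by
    intro h
    obtain ⟨v, hv0, hv⟩ := Matrix.exists_vecMul_eq_zero_iff.2 h
    apply hv0
    have := hinj (fun i => algebraMap E F (v i)) (fun j => by
      have := congrArg (algebraMap E F) (congrFun hv j)
      simpa [Matrix.vecMul, dotProduct, hG0] using this)
    funext i
    exact (algebraMap E F).injective (by simpa using congrFun this i)
  have hrepr : ∀ x : Matrix (Fin n) (Fin n) F,
      (∀ j, (x * b j).trace ∈ Set.range (algebraMap E F)) →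
      ∀ i, b.repr x i ∈ Set.range (algebraMap E F) := by
    intro x hx
    choose t ht using hx
    let u := Matrix.vecMul t (Matrix.of G0)⁻¹
    have hu : Matrix.vecMul u (Matrix.of G0) = t := by
      simp only [u, Matrix.vecMul_vecMul]
      rw [Matrix.nonsing_inv_mul _ (Ne.isUnit hdet), Matrix.vecMul_one]
    have := hinj (fun i => b.repr x i - algebraMap E F (u i)) (fun j => by
      have h1 := congrArg (algebraMap E F) (congrFun hu j)
      simp only [Matrix.vecMul, dotProduct, map_sum, map_mul, Matrix.of_apply, hG0, ht] at h1
      simp only [sub_mul, Finset.sum_sub_distrib, h1]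
      have h2 := congrArg (fun z => (z * b j).trace) (b.sum_repr x)
      simp only [Finset.sum_mul, Matrix.trace_sum, smul_mul_assoc, Matrix.trace_smul,
        smul_eq_mul] at h2
      rw [h2, sub_self])
    intro i
    exact ⟨u i, (sub_eq_zero.1 (congrFun this i)).symm⟩
  let L := F ⊗[E] F
  let g : F →+* L := (Algebra.TensorProduct.includeRight : F →ₐ[E] F ⊗[E] F).toRingHom
  have hfg : ∀ c ∈ Set.range (algebraMap E F), algebraMap F L c = g c := by
    rintro _ ⟨e, rfl⟩
    change (algebraMap E F e) ⊗ₜ[E] (1 : F) = (1 : F) ⊗ₜ[E] (algebraMap E F e)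
    exact Algebra.TensorProduct.tmul_one_eq_one_tmul e
  let ψ0 : Matrix (Fin n) (Fin n) F →ₗ[F] Matrix (Fin n) (Fin n) L :=
    b.constr F fun i => (b i).map g
  have hψ0 : ∀ x : Matrix (Fin n) (Fin n) F,
      (∀ j, (x * b j).trace ∈ Set.range (algebraMap E F)) → ψ0 x = x.map g := by
    intro x hx
    have h1 : x.map g = ∑ i, g (b.repr x i) • (b i).map g := by
      ext r c
      have h2 := congrArg (fun z => g (z r c)) (b.sum_repr x)
      simp only [Matrix.sum_apply, Matrix.smul_apply, map_sum, map_mul, smul_eq_mul] at h2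
      simp only [Matrix.sum_apply, Matrix.smul_apply, Matrix.map_apply, smul_eq_mul]
      exact h2.symm
    rw [h1]
    simp only [ψ0, Module.Basis.constr_apply_fintype, Module.Basis.equivFun_apply]
    refine Finset.sum_congr rfl fun i _ => ?_
    rw [← hfg _ (hrepr x hx i), algebraMap_smul]
  have hψS : ∀ x ∈ S, ψ0 x = x.map g := fun x hx =>
    hψ0 x fun j => htr _ (S.mul_mem hx (hbS j))
  have hone : ψ0 1 = 1 := by
    rw [hψ0 1 fun j => by rw [one_mul]; exact htr _ (hbS j)]
    simp
  have hmul : ∀ x y, ψ0 (x * y) = ψ0 x * ψ0 y := by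
    have : (LinearMap.mul F _).compr₂ ψ0 = (LinearMap.mul F _).compl₁₂ ψ0 ψ0 := by
      refine b.ext fun i => b.ext fun j => ?_
      simp only [LinearMap.compr₂_apply, LinearMap.mul_apply', LinearMap.compl₁₂_apply]
      rw [hψS _ (S.mul_mem (hbS i) (hbS j)), hψS _ (hbS i), hψS _ (hbS j), Matrix.map_mul]
    intro x y
    exact LinearMap.congr_fun (LinearMap.congr_fun this x) y
  let ψ : Matrix (Fin n) (Fin n) F →ₐ[F] Matrix (Fin n) (Fin n) L :=
    AlgHom.ofLinearMap ψ0 hone hmul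
  have h1 := vin_charpoly ψ δ
  have h2 : ψ δ = δ.map g := hψS δ hδ
  rw [h2, Matrix.charpoly_map, Matrix.charpoly_map] at h1
  have h3 := congrArg (fun p => Polynomial.coeff p i) h1
  simp only [Polynomial.coeff_map] at h3
  have := (Algebra.IsEffective.of_faithfullyFlat E F) (δ.charpoly.coeff i)
  refine this.1 ?_
  rw [Algebra.TensorProduct.includeLeftSubRight_apply, sub_eq_zero]
  exact h3.symm


/-- **Vinberg's lemma** (Prasad–Rapinchuk, Lemma 5.2). Let `Δ ⊆ Mₙ(K)` be an absolutely
irreducible multiplicative semigroup and `E` a subfield of `K` containing the traces of all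
elements of `Δ`. Then the characteristic polynomial of every `δ ∈ Δ` has coefficients in `E`. -/
theorem charpoly_coeff_mem_of_trace_mem {K : Type} [Field K] {n : ℕ}
    (Δ : Subsemigroup (Matrix (Fin n) (Fin n) K))
    (hirr : Δ.AbsolutelyIrreducible)
    (E : Subfield K) (htr : ∀ δ ∈ Δ, Matrix.trace δ ∈ E) :
    ∀ δ ∈ Δ, ∀ i : ℕ, (Matrix.charpoly δ).coeff i ∈ E := by

  intro δ hδ i
  rcases eq_or_ne δ 0 with rfl | hδ0
  · rw [Matrix.charpoly_zero, Polynomial.coeff_X_pow]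
    split_ifs
    · exact E.one_mem
    · exact E.zero_mem
  let f := (algebraMap K (AlgebraicClosure K)).mapMatrix (m := Fin n)
  have hf : Function.Injective f := by
    intro a b hab
    ext r c
    exact (algebraMap K (AlgebraicClosure K)).injective (congrFun (congrFun hab r) c)
  let S := Δ.map f.toMonoidHom.toMulHom
  have hspan := vin_span hirr.1 S (fun W hW => hirr.2 W fun d hd x hx =>
    hW _ ⟨d, hd, rfl⟩ x hx) (f δ) ⟨δ, hδ, rfl⟩ (by
      intro h; exact hδ0 (hf (by rw [h, map_zero])))
  obtain ⟨e, he⟩ := vin_main (E := E) S hspan (by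
    rintro _ ⟨d, hd, rfl⟩
    refine ⟨⟨_, htr d hd⟩, ?_⟩
    exact AddMonoidHom.map_trace (algebraMap K (AlgebraicClosure K)).toAddMonoidHom d)
    (f δ) ⟨δ, hδ, rfl⟩ i
  have h1 : (f δ).charpoly = δ.charpoly.map (algebraMap K (AlgebraicClosure K)) :=
    Matrix.charpoly_map δ _
  rw [h1, Polynomial.coeff_map] at he
  have : (e : K) = δ.charpoly.coeff i := (algebraMap K (AlgebraicClosure K)).injective he
  rw [← this]; exact e.2
end

section
/- Let p be a prime and let a_1, …, a_r ∈ ℤ_p. Then there exist b_1, …, b_r ∈ ℤ_p with b_i ≡ a_i (mod p) for all i such that b_1, …, b_r are algebraically independent over ℚ. -/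
theorem padic_step (p : ℕ) [Fact p.Prime] (S : Subalgebra ℚ ℚ_[p]) [Countable S] (a : ℤ_[p]) :
    ∃ b : ℤ_[p], (p : ℤ_[p]) ∣ (b - a) ∧ Transcendental S (b : ℚ_[p]) := by
  have hc : Set.Countable {x : ℚ_[p] | IsAlgebraic S x} := Algebraic.countable S ℚ_[p]
  have hb : ¬ (Metric.ball (a : ℚ_[p]) 1).Countable := by
    intro h
    have h1 := continuum_le_cardinal_of_isOpen ℚ_[p] (Metric.isOpen_ball (x := (a : ℚ_[p])) (ε := 1))
      ⟨_, Metric.mem_ball_self one_pos⟩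
    have h2 := Cardinal.le_aleph0_iff_set_countable.mpr h
    exact absurd (h1.trans h2) (not_le.mpr Cardinal.aleph0_lt_continuum)
  obtain ⟨x, hx, hx'⟩ : ∃ x ∈ Metric.ball (a : ℚ_[p]) 1, ¬ IsAlgebraic S x := by
    by_contra! h
    exact hb (hc.mono h)
  rw [mem_ball_iff_norm] at hx
  have hx1 : ‖x‖ ≤ 1 := by
    have := Padic.nonarchimedean (x - (a : ℚ_[p])) (a : ℚ_[p])
    rw [sub_add_cancel] at this
    exact this.trans (max_le hx.le a.2)
  obtain ⟨y, rfl⟩ : ∃ y : ℤ_[p], (y : ℚ_[p]) = x := ⟨⟨x, hx1⟩, rfl⟩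
  refine ⟨y, ?_, hx'⟩
  rw [← PadicInt.norm_lt_one_iff_dvd, PadicInt.norm_def]
  rw [PadicInt.coe_sub]
  exact hx

/-- Let `p` be a prime and `a 1, …, a r ∈ ℤ_p`. Then there exist `b 1, …, b r ∈ ℤ_p` with
`b i ≡ a i (mod p)` for all `i` which are algebraically independent over `ℚ` (as elements
of `ℚ_p`). -/
theorem exists_algebraically_independent_padic_approx
    (p : ℕ) [Fact p.Prime] (r : ℕ) (a : Fin r → ℤ_[p]) :
    ∃ b : Fin r → ℤ_[p], (∀ i, (p : ℤ_[p]) ∣ (b i - a i)) ∧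
      AlgebraicIndependent ℚ (fun i => ((b i : ℚ_[p]))) := by
  induction r with
  | zero =>
    refine ⟨a, fun i => i.elim0, ?_⟩
    rw [algebraicIndependent_empty_type_iff]
    exact (algebraMap ℚ ℚ_[p]).injective
  | succ n ih =>
    obtain ⟨b, hb, hi⟩ := ih (fun i => a i.succ)
    have hcm : Countable (MvPolynomial (Fin n) ℚ) := by
      rw [← Cardinal.mk_le_aleph0_iff]
      refine MvPolynomial.cardinalMk_le_max_lift.trans ?_
      simp
    have : Countable (Algebra.adjoin ℚ (Set.range fun i => (b i : ℚ_[p]))) :=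
      hi.aevalEquiv.symm.toEquiv.injective.countable
    obtain ⟨c, hc, ht⟩ := padic_step p (Algebra.adjoin ℚ (Set.range fun i => (b i : ℚ_[p]))) (a 0)
    refine ⟨Fin.cons c b, ?_, ?_⟩
    · intro i
      refine Fin.cases ?_ (fun j => ?_) i
      · simpa using hc
      · simpa using hb j
    · have h := (hi.option_iff_transcendental (c : ℚ_[p])).mpr ht
      rw [← algebraicIndependent_equiv (finSuccEquiv n).symm]
      convert h using 1
      funext o
      cases o <;> simp
end
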